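/- arXiv:2505.07733 — 7 statements merged into one kernel-verified Lean document; each statement's English description precedes it below -/
import Mathlib

section
/- Let A₁ ∈ ℝ^{n×n}, A₂ ∈ ℝ^{n×N}, A_s ∈ ℝ^{N×n}, B ∈ ℝ^{n×m}, and set Ā₁ = A₁ + A₂·A_s. Let U₀ ∈ ℝ^{m×T}, X₀, X₁, W₀ ∈ ℝ^{n×T}, Q₀ ∈ ℝ^{N×T} satisfy the data equation X₁ = Ā₁·X₀ + A₂·Q₀ + B·U₀ + W₀. Suppose G₁ ∈ ℝ^{T×n} and G₂ ∈ ℝ^{T×N} satisfy X₀·G₁ = I_n, Q₀·G₁ = 0, X₀·G₂ = 0, Q₀·G₂ = I_N, and define K₁ = U₀·G₁ and K₂ = U₀·G₂. Then (X₁ − W₀)·G₁ = Ā₁ + B·K₁ and (X₁ − W₀)·G₂ = A₂ + B·K₂; consequently, for every x ∈ ℝⁿ, q ∈ ℝᴺ and w ∈ ℝⁿ, the closed-loop update (Ā₁ + B·K₁)x + (A₂ + B·K₂)q + w equals (X₁ − W₀)·G₁·x + (X₁ − W₀)·G₂·q + w. -/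
open Matrix

/-- Lemma 1: data-based representation of the closed-loop system. -/
theorem data_based_closed_loop_representation
    (n N m T : ℕ)
    (A₁ : Matrix (Fin n) (Fin n) ℝ) (A₂ : Matrix (Fin n) (Fin N) ℝ)
    (As : Matrix (Fin N) (Fin n) ℝ) (B : Matrix (Fin n) (Fin m) ℝ)
    (Abar : Matrix (Fin n) (Fin n) ℝ) (hAbar : Abar = A₁ + A₂ * As)
    (U₀ : Matrix (Fin m) (Fin T) ℝ)
    (X₀ X₁ W₀ : Matrix (Fin n) (Fin T) ℝ)
    (Q₀ : Matrix (Fin N) (Fin T) ℝ)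
    (hdata : X₁ = Abar * X₀ + A₂ * Q₀ + B * U₀ + W₀)
    (G₁ : Matrix (Fin T) (Fin n) ℝ) (G₂ : Matrix (Fin T) (Fin N) ℝ)
    (hG11 : X₀ * G₁ = 1) (hG21 : Q₀ * G₁ = 0)
    (hG12 : X₀ * G₂ = 0) (hG22 : Q₀ * G₂ = 1)
    (K₁ : Matrix (Fin m) (Fin n) ℝ) (hK₁ : K₁ = U₀ * G₁)
    (K₂ : Matrix (Fin m) (Fin N) ℝ) (hK₂ : K₂ = U₀ * G₂) :
    (X₁ - W₀) * G₁ = Abar + B * K₁ ∧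
    (X₁ - W₀) * G₂ = A₂ + B * K₂ ∧
    ∀ (x : Fin n → ℝ) (q : Fin N → ℝ) (w : Fin n → ℝ),
      (Abar + B * K₁) *ᵥ x + (A₂ + B * K₂) *ᵥ q + w
        = ((X₁ - W₀) * G₁) *ᵥ x + ((X₁ - W₀) * G₂) *ᵥ q + w := by
  have hD : X₁ - W₀ = Abar * X₀ + A₂ * Q₀ + B * U₀ := by
    rw [hdata, add_sub_cancel_right]
  have h1 : (X₁ - W₀) * G₁ = Abar + B * K₁ := by
    rw [hD, hK₁, Matrix.add_mul, Matrix.add_mul, Matrix.mul_assoc, Matrix.mul_assoc,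
      Matrix.mul_assoc, hG11, hG21, Matrix.mul_one, Matrix.mul_zero, add_zero]
  have h2 : (X₁ - W₀) * G₂ = A₂ + B * K₂ := by
    rw [hD, hK₂, Matrix.add_mul, Matrix.add_mul, Matrix.mul_assoc, Matrix.mul_assoc,
      Matrix.mul_assoc, hG12, hG22, Matrix.mul_one, Matrix.mul_zero, zero_add]
  refine ⟨h1, h2, fun x q w => ?_⟩
  rw [h1, h2]
end

section
/- Let F ∈ ℝ^{s×n}, g ∈ ℝ^s, λ ∈ (0,1], Q : ℝⁿ → ℝᴺ, M₁ ∈ ℝ^{n×n}, M₂ ∈ ℝ^{n×N}. Suppose there exist a matrix P_s ∈ ℝ^{s×s} with all entries nonnegative and a vector l ∈ ℝ^s such that: (i) P_s·F = F·M₁; (ii) for every x with F·x ≤ g (componentwise) one has F·M₂·Q(x) ≤ l componentwise; and (iii) P_s·g ≤ λ·g − l componentwise. Then for every x with F·x ≤ g, F·(M₁·x + M₂·Q(x)) ≤ λ·g componentwise; i.e., the polyhedral set {x : F·x ≤ g} is λ-contractive for the closed-loop dynamics x⁺ = M₁·x + M₂·Q(x). -/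
open Matrix

/-- model-based core of Theorem 1: sufficient conditions for
`λ`-contractivity of the polyhedral set `{x : F·x ≤ g}` for the closed-loop
dynamics `x⁺ = M₁·x + M₂·Q(x)`. -/
theorem polyhedral_contractivity_sufficient_conditions
    (s n N : ℕ)
    (F : Matrix (Fin s) (Fin n) ℝ) (g : Fin s → ℝ)
    (lam : ℝ) (hlam : 0 < lam ∧ lam ≤ 1)
    (Q : (Fin n → ℝ) → (Fin N → ℝ))
    (M₁ : Matrix (Fin n) (Fin n) ℝ) (M₂ : Matrix (Fin n) (Fin N) ℝ)
    (Ps : Matrix (Fin s) (Fin s) ℝ) (hPs : ∀ i j, 0 ≤ Ps i j)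
    (l : Fin s → ℝ)
    (h1 : Ps * F = F * M₁)
    (h2 : ∀ x : Fin n → ℝ, F *ᵥ x ≤ g → F *ᵥ (M₂ *ᵥ Q x) ≤ l)
    (h3 : Ps *ᵥ g ≤ lam • g - l) :
    ∀ x : Fin n → ℝ, F *ᵥ x ≤ g → F *ᵥ (M₁ *ᵥ x + M₂ *ᵥ Q x) ≤ lam • g := by
  intro x hx
  have e : F *ᵥ (M₁ *ᵥ x) = Ps *ᵥ (F *ᵥ x) := by
    rw [Matrix.mulVec_mulVec, Matrix.mulVec_mulVec, h1]
  rw [Matrix.mulVec_add, e]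
  intro i
  have a : (Ps *ᵥ (F *ᵥ x)) i ≤ (Ps *ᵥ g) i := by
    rw [Matrix.mulVec, Matrix.mulVec, dotProduct, dotProduct]
    exact Finset.sum_le_sum fun j _ => mul_le_mul_of_nonneg_left (hx j) (hPs i j)
  have b := h2 x hx i
  have c := h3 i
  rw [Pi.sub_apply] at c
  rw [Pi.add_apply]
  linarith
end

section
/- Let A₁ ∈ ℝ^{n×n}, A₂ ∈ ℝ^{n×N}, A_s ∈ ℝ^{N×n}, B ∈ ℝ^{n×m}, Ā₁ = A₁ + A₂·A_s, and let Q : ℝⁿ → ℝᴺ. Let the disturbance-free data satisfy X₁ = Ā₁·X₀ + A₂·Q₀ + B·U₀, and let G₁ ∈ ℝ^{T×n}, G₂ ∈ ℝ^{T×N} satisfy X₀·G₁ = I_n, Q₀·G₁ = 0, X₀·G₂ = 0, Q₀·G₂ = I_N; set K₁ = U₀·G₁ and K₂ = U₀·G₂. Let F ∈ ℝ^{s×n}, g ∈ ℝ^s, λ ∈ (0,1]. Suppose there exist P_s ∈ ℝ^{s×s} with all entries nonnegative and l ∈ ℝ^s such that: (i) P_s·F = F·X₁·G₁; (ii) for every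 x with F·x ≤ g, F·X₁·G₂·Q(x) ≤ l componentwise; and (iii) P_s·g ≤ λ·g − l componentwise. Then for every x with F·x ≤ g, F·((Ā₁ + B·K₁)·x + (A₂ + B·K₂)·Q(x)) ≤ λ·g componentwise; i.e., the safe set S(F,g) is λ-contractive (hence robustly invariant) under the controller u = K₁x + K₂Q(x). -/
open Matrix

/-- Theorem 1, disturbance-free case: data-based sufficient
conditions for `λ`-contractivity of the polyhedral safe set under the
controller `u = K₁x + K₂Q(x)`. -/
theorem data_based_safe_control_nonlinearity_minimization
    (n N m T s : ℕ)
    (A₁ : Matrix (Fin n) (Fin n) ℝ) (A₂ : Matrix (Fin n) (Fin N) ℝ)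
    (As : Matrix (Fin N) (Fin n) ℝ) (B : Matrix (Fin n) (Fin m) ℝ)
    (Abar : Matrix (Fin n) (Fin n) ℝ) (hAbar : Abar = A₁ + A₂ * As)
    (Q : (Fin n → ℝ) → (Fin N → ℝ))
    (U₀ : Matrix (Fin m) (Fin T) ℝ)
    (X₀ X₁ : Matrix (Fin n) (Fin T) ℝ)
    (Q₀ : Matrix (Fin N) (Fin T) ℝ)
    (hdata : X₁ = Abar * X₀ + A₂ * Q₀ + B * U₀)
    (G₁ : Matrix (Fin T) (Fin n) ℝ) (G₂ : Matrix (Fin T) (Fin N) ℝ)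
    (hG11 : X₀ * G₁ = 1) (hG21 : Q₀ * G₁ = 0)
    (hG12 : X₀ * G₂ = 0) (hG22 : Q₀ * G₂ = 1)
    (K₁ : Matrix (Fin m) (Fin n) ℝ) (hK₁ : K₁ = U₀ * G₁)
    (K₂ : Matrix (Fin m) (Fin N) ℝ) (hK₂ : K₂ = U₀ * G₂)
    (F : Matrix (Fin s) (Fin n) ℝ) (g : Fin s → ℝ)
    (lam : ℝ) (hlam : 0 < lam ∧ lam ≤ 1)
    (Ps : Matrix (Fin s) (Fin s) ℝ) (hPs : ∀ i j, 0 ≤ Ps i j)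
    (l : Fin s → ℝ)
    (h1 : Ps * F = F * (X₁ * G₁))
    (h2 : ∀ x : Fin n → ℝ, F *ᵥ x ≤ g → F *ᵥ ((X₁ * G₂) *ᵥ Q x) ≤ l)
    (h3 : Ps *ᵥ g ≤ lam • g - l) :
    ∀ x : Fin n → ℝ, F *ᵥ x ≤ g →
      F *ᵥ ((Abar + B * K₁) *ᵥ x + (A₂ + B * K₂) *ᵥ Q x) ≤ lam • g := by
  intro x hx
  have e1 : Abar + B * K₁ = X₁ * G₁ := by
    rw [hdata, hK₁, Matrix.add_mul, Matrix.add_mul, Matrix.mul_assoc, Matrix.mul_assoc,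
      Matrix.mul_assoc, hG11, hG21]
    simp
  have e2 : A₂ + B * K₂ = X₁ * G₂ := by
    rw [hdata, hK₂, Matrix.add_mul, Matrix.add_mul, Matrix.mul_assoc, Matrix.mul_assoc,
      Matrix.mul_assoc, hG12, hG22]
    simp
  have e3 : F *ᵥ ((X₁ * G₁) *ᵥ x) = Ps *ᵥ (F *ᵥ x) := by
    rw [Matrix.mulVec_mulVec, ← h1, Matrix.mulVec_mulVec]
  rw [e1, e2, Matrix.mulVec_add, e3]
  intro i
  have a1 : (Ps *ᵥ (F *ᵥ x)) i ≤ (Ps *ᵥ g) i := by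
    change ∑ j, Ps i j * (F *ᵥ x) j ≤ ∑ j, Ps i j * g j
    exact Finset.sum_le_sum fun j _ => mul_le_mul_of_nonneg_left (hx j) (hPs i j)
  have a2 := h2 x hx i
  have a3 := h3 i
  simp only [Pi.add_apply, Pi.sub_apply] at a3 ⊢
  linarith
end

section
/- Let A₁ ∈ ℝ^{n×n}, A₂ ∈ ℝ^{n×N}, A_s ∈ ℝ^{N×n}, B ∈ ℝ^{n×m}, Ā₁ = A₁ + A₂·A_s, and Q : ℝⁿ → ℝᴺ. Let the data satisfy X₁ = Ā₁·X₀ + A₂·Q₀ + B·U₀ + W₀ where the disturbance data matrix W₀ ∈ ℝ^{n×T} satisfies ‖W₀‖ ≤ T·h_w, and let G₁ ∈ ℝ^{T×n}, G₂ ∈ ℝ^{T×N} satisfy X₀·G₁ = I_n, Q₀·G₁ = 0, X₀·G₂ = 0, Q₀·G₂ = I_N; set K₁ = U₀·G₁, K₂ = U₀·G₂. Let F ∈ ℝ^{s×n}, g ∈ ℝ^s, λ ∈ (0,1]. Suppose there exist P_s ∈ ℝ^{s×s} with all entries nonnegative and l ∈ ℝ^s such that: (i) P_s·F = F·X₁·G₁;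 (ii) for each row index i, for all x with F·x ≤ g, all W ∈ ℝ^{n×T} with ‖W‖ ≤ T·h_w, and all w ∈ ℝⁿ with ‖w‖ ≤ h_w, the i-th component of F·(X₁·G₂·Q(x) − W·(G₁·x + G₂·Q(x)) + w) is at most l_i; and (iii) P_s·g ≤ λ·g − l componentwise. Then for every x with F·x ≤ g and every w with ‖w‖ ≤ h_w, F·((Ā₁ + B·K₁)·x + (A₂ + B·K₂)·Q(x) + w) ≤ λ·g componentwise. -/
open Matrix

/-- The ∞-norm of a vector (maximum absolute entry). -/
noncomputable def vecNormInf {n : ℕ} (x : Fin n → ℝ) : ℝ := ⨆ i, |x i|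

/-- The induced L∞ operator norm of a matrix (maximum absolute row sum). -/
noncomputable def matNormInf {n T : ℕ} (M : Matrix (Fin n) (Fin T) ℝ) : ℝ :=
  ⨆ i, ∑ j, |M i j|

/-- Corollary 1: data-based sufficient conditions for
`λ`-contractivity of the polyhedral safe set in the presence of additive
disturbances, with the nonlinear remainder lumped into the disturbance. -/
theorem data_based_safe_control_with_disturbance
    (n N m T s : ℕ)
    (A₁ : Matrix (Fin n) (Fin n) ℝ) (A₂ : Matrix (Fin n) (Fin N) ℝ)
    (As : Matrix (Fin N) (Fin n) ℝ) (B : Matrix (Fin n) (Fin m) ℝ)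
    (Abar : Matrix (Fin n) (Fin n) ℝ) (hAbar : Abar = A₁ + A₂ * As)
    (Q : (Fin n → ℝ) → (Fin N → ℝ))
    (U₀ : Matrix (Fin m) (Fin T) ℝ)
    (X₀ X₁ W₀ : Matrix (Fin n) (Fin T) ℝ)
    (Q₀ : Matrix (Fin N) (Fin T) ℝ)
    (h_w : ℝ)
    (hW₀ : matNormInf W₀ ≤ T * h_w)
    (hdata : X₁ = Abar * X₀ + A₂ * Q₀ + B * U₀ + W₀)
    (G₁ : Matrix (Fin T) (Fin n) ℝ) (G₂ : Matrix (Fin T) (Fin N) ℝ)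
    (hG11 : X₀ * G₁ = 1) (hG21 : Q₀ * G₁ = 0)
    (hG12 : X₀ * G₂ = 0) (hG22 : Q₀ * G₂ = 1)
    (K₁ : Matrix (Fin m) (Fin n) ℝ) (hK₁ : K₁ = U₀ * G₁)
    (K₂ : Matrix (Fin m) (Fin N) ℝ) (hK₂ : K₂ = U₀ * G₂)
    (F : Matrix (Fin s) (Fin n) ℝ) (g : Fin s → ℝ)
    (lam : ℝ) (hlam : 0 < lam ∧ lam ≤ 1)
    (Ps : Matrix (Fin s) (Fin s) ℝ) (hPs : ∀ i j, 0 ≤ Ps i j)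
    (l : Fin s → ℝ)
    (h1 : Ps * F = F * (X₁ * G₁))
    (h2 : ∀ (i : Fin s) (x : Fin n → ℝ) (W : Matrix (Fin n) (Fin T) ℝ)
        (w : Fin n → ℝ),
        F *ᵥ x ≤ g → matNormInf W ≤ T * h_w → vecNormInf w ≤ h_w →
        (F *ᵥ ((X₁ * G₂) *ᵥ Q x - W *ᵥ (G₁ *ᵥ x + G₂ *ᵥ Q x) + w)) i ≤ l i)
    (h3 : Ps *ᵥ g ≤ lam • g - l) :
    ∀ (x : Fin n → ℝ) (w : Fin n → ℝ), F *ᵥ x ≤ g → vecNormInf w ≤ h_w →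
      F *ᵥ ((Abar + B * K₁) *ᵥ x + (A₂ + B * K₂) *ᵥ Q x + w) ≤ lam • g := by
  intro x w hx hw i
  have e1 : X₁ * G₁ = Abar + B * K₁ + W₀ * G₁ := by
    rw [hdata, hK₁]
    simp only [Matrix.add_mul, Matrix.mul_assoc, hG11, hG21, Matrix.mul_one, Matrix.mul_zero,
      add_zero]
  have e2 : X₁ * G₂ = A₂ + B * K₂ + W₀ * G₂ := by
    rw [hdata, hK₂]
    simp only [Matrix.add_mul, Matrix.mul_assoc, hG12, hG22, Matrix.mul_one, Matrix.mul_zero,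
      zero_add]
  have e3 : (Abar + B * K₁) *ᵥ x + (A₂ + B * K₂) *ᵥ Q x + w
      = (X₁ * G₁) *ᵥ x
        + ((X₁ * G₂) *ᵥ Q x - W₀ *ᵥ (G₁ *ᵥ x + G₂ *ᵥ Q x) + w) := by
    rw [e1, e2, Matrix.add_mulVec _ (W₀ * G₁), Matrix.add_mulVec _ (W₀ * G₂),
      Matrix.mulVec_add, Matrix.mulVec_mulVec, Matrix.mulVec_mulVec]
    abel
  have e4 : F *ᵥ ((X₁ * G₁) *ᵥ x) = Ps *ᵥ (F *ᵥ x) := by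
    rw [Matrix.mulVec_mulVec, Matrix.mulVec_mulVec, h1]
  have e5 : (Ps *ᵥ (F *ᵥ x)) i ≤ (Ps *ᵥ g) i := by
    exact dotProduct_le_dotProduct_of_nonneg_left hx (fun j => hPs i j)
  have e6 := h2 i x W₀ w hx hW₀ hw
  have e7 := h3 i
  rw [e3, Matrix.mulVec_add, e4]
  simp only [Pi.add_apply, Pi.sub_apply] at e7 ⊢
  linarith
end

section
/- Let F ∈ ℝ^{s×n}, g ∈ ℝ^s, λ > 0, Q : ℝⁿ → ℝᴺ, M₁ ∈ ℝ^{n×n}, M₂ ∈ ℝ^{n×N}, and fix a row index i. Suppose α ∈ ℝ^s has all entries nonnegative, β ∈ ℝⁿ satisfies βᵀ = αᵀ·F − Fᵢ·M₁ (where Fᵢ is the i-th row of F) and βᵀ = Fᵢ·M₂·L₁ for some matrix L₁ ∈ ℝ^{N×n}, and v ∈ ℝⁿ satisfies L₁·v = Q(x₁). Suppose further that x₁ ∈ ℝⁿ is a global minimizer over ℝⁿ of the Lagrangian φ(x) = αᵀ·(F·x − g) − Fᵢ·(M₁·x + M₂·Q(x)), and that αᵀ·g + βᵀ·(v − x₁)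 ≤ λ·gᵢ. Then for every x with F·x ≤ g componentwise, Fᵢ·(M₁·x + M₂·Q(x)) ≤ λ·gᵢ. -/
open Matrix

/-- row-wise core of Theorem 2: primal-dual sufficient condition
for row `i` of the `λ`-contractivity constraint, where `x₁` globally minimizes
the Lagrangian. -/
theorem primal_dual_rowwise_contractivity
    (s n N : ℕ)
    (F : Matrix (Fin s) (Fin n) ℝ) (g : Fin s → ℝ)
    (lam : ℝ) (hlam : 0 < lam)
    (Q : (Fin n → ℝ) → (Fin N → ℝ))
    (M₁ : Matrix (Fin n) (Fin n) ℝ) (M₂ : Matrix (Fin n) (Fin N) ℝ)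
    (i : Fin s)
    (α : Fin s → ℝ) (hα : ∀ j, 0 ≤ α j)
    (β : Fin n → ℝ) (L₁ : Matrix (Fin N) (Fin n) ℝ)
    (hβ1 : β = α ᵥ* F - (F i) ᵥ* M₁)
    (hβ2 : β = ((F i) ᵥ* M₂) ᵥ* L₁)
    (x₁ : Fin n → ℝ) (v : Fin n → ℝ) (hv : L₁ *ᵥ v = Q x₁)
    (hmin : ∀ x : Fin n → ℝ,
        α ⬝ᵥ (F *ᵥ x₁ - g) - (F i) ⬝ᵥ (M₁ *ᵥ x₁ + M₂ *ᵥ Q x₁)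
          ≤ α ⬝ᵥ (F *ᵥ x - g) - (F i) ⬝ᵥ (M₁ *ᵥ x + M₂ *ᵥ Q x))
    (hbound : α ⬝ᵥ g + β ⬝ᵥ (v - x₁) ≤ lam * g i) :
    ∀ x : Fin n → ℝ, F *ᵥ x ≤ g →
      (F i) ⬝ᵥ (M₁ *ᵥ x + M₂ *ᵥ Q x) ≤ lam * g i := by
  intro x hx
  have h1 : α ⬝ᵥ (F *ᵥ x - g) ≤ 0 := by
    refine Finset.sum_nonpos fun j _ => ?_
    exact mul_nonpos_of_nonneg_of_nonpos (hα j) (sub_nonpos.mpr (hx j))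
  have h2 := hmin x
  have h3 : β ⬝ᵥ v = (F i) ⬝ᵥ (M₂ *ᵥ Q x₁) := by
    rw [hβ2, ← hv, ← dotProduct_mulVec, ← dotProduct_mulVec]
  have h4 : β ⬝ᵥ x₁ = α ⬝ᵥ (F *ᵥ x₁) - (F i) ⬝ᵥ (M₁ *ᵥ x₁) := by
    rw [hβ1, sub_dotProduct, ← dotProduct_mulVec, ← dotProduct_mulVec]
  rw [dotProduct_sub, h3, h4] at hbound
  rw [dotProduct_sub α (F *ᵥ x₁) g, dotProduct_add (F i) (M₁ *ᵥ x₁) (M₂ *ᵥ Q x₁)] at h2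
  linarith
end

section
/- Let A₁ ∈ ℝ^{n×n}, A₂ ∈ ℝ^{n×N}, A_s ∈ ℝ^{N×n}, B ∈ ℝ^{n×m}, Ā₁ = A₁ + A₂·A_s, and Q : ℝⁿ → ℝᴺ. Let the disturbance-free data satisfy X₁ = Ā₁·X₀ + A₂·Q₀ + B·U₀, and let G₁ ∈ ℝ^{T×n}, G₂ ∈ ℝ^{T×N} satisfy X₀·G₁ = I_n, Q₀·G₁ = 0, X₀·G₂ = 0, Q₀·G₂ = I_N; set K₁ = U₀·G₁, K₂ = U₀·G₂. Let F ∈ ℝ^{s×n}, g ∈ ℝ^s, λ ∈ (0,1], x₁ ∈ ℝⁿ, L₁ ∈ ℝ^{N×n}, and v ∈ ℝⁿ with L₁·v = Q(x₁). Suppose there exist P_s ∈ ℝ^{s×s} with all entries nonnegative (with rows αᵢᵀ) and P_x ∈ ℝ^{s×n} (with rows βᵢᵀ) such that: (i) P_s·F − F·X₁·G₁ = P_x; (ii) F·X₁·G₂·L₁ = P_x; (iii) for each i, x₁ is a global minimizer over ℝⁿ of φᵢ(x) = αᵢᵀ·(F·x − g) − Fᵢ·(X₁·G₁·x + X₁·G₂·Q(x));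 and (iv) P_s·g + P_x·(v − x₁) ≤ λ·g componentwise. Then for every x with F·x ≤ g, F·((Ā₁ + B·K₁)·x + (A₂ + B·K₂)·Q(x)) ≤ λ·g componentwise; i.e., the safe set S(F,g) is λ-contractive (hence robustly invariant) under the controller u = K₁x + K₂Q(x). -/
open Matrix

/-- Theorem 2, disturbance-free case: data-based primal-dual
safe control design. The safe set is `λ`-contractive under the controller
`u = K₁x + K₂Q(x)`. -/
theorem data_based_primal_dual_safe_control
    (n N m T s : ℕ)
    (A₁ : Matrix (Fin n) (Fin n) ℝ) (A₂ : Matrix (Fin n) (Fin N) ℝ)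
    (As : Matrix (Fin N) (Fin n) ℝ) (B : Matrix (Fin n) (Fin m) ℝ)
    (Abar : Matrix (Fin n) (Fin n) ℝ) (hAbar : Abar = A₁ + A₂ * As)
    (Q : (Fin n → ℝ) → (Fin N → ℝ))
    (U₀ : Matrix (Fin m) (Fin T) ℝ)
    (X₀ X₁ : Matrix (Fin n) (Fin T) ℝ)
    (Q₀ : Matrix (Fin N) (Fin T) ℝ)
    (hdata : X₁ = Abar * X₀ + A₂ * Q₀ + B * U₀)
    (G₁ : Matrix (Fin T) (Fin n) ℝ) (G₂ : Matrix (Fin T) (Fin N) ℝ)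
    (hG11 : X₀ * G₁ = 1) (hG21 : Q₀ * G₁ = 0)
    (hG12 : X₀ * G₂ = 0) (hG22 : Q₀ * G₂ = 1)
    (K₁ : Matrix (Fin m) (Fin n) ℝ) (hK₁ : K₁ = U₀ * G₁)
    (K₂ : Matrix (Fin m) (Fin N) ℝ) (hK₂ : K₂ = U₀ * G₂)
    (F : Matrix (Fin s) (Fin n) ℝ) (g : Fin s → ℝ)
    (lam : ℝ) (hlam : 0 < lam ∧ lam ≤ 1)
    (x₁ : Fin n → ℝ) (L₁ : Matrix (Fin N) (Fin n) ℝ)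
    (v : Fin n → ℝ) (hv : L₁ *ᵥ v = Q x₁)
    (Ps : Matrix (Fin s) (Fin s) ℝ) (hPs : ∀ i j, 0 ≤ Ps i j)
    (Px : Matrix (Fin s) (Fin n) ℝ)
    (h1 : Ps * F - F * (X₁ * G₁) = Px)
    (h2 : F * (X₁ * G₂) * L₁ = Px)
    (h3 : ∀ (i : Fin s) (x : Fin n → ℝ),
        (Ps i) ⬝ᵥ (F *ᵥ x₁ - g) - (F i) ⬝ᵥ ((X₁ * G₁) *ᵥ x₁ + (X₁ * G₂) *ᵥ Q x₁)
          ≤ (Ps i) ⬝ᵥ (F *ᵥ x - g) - (F i) ⬝ᵥ ((X₁ * G₁) *ᵥ x + (X₁ * G₂) *ᵥ Q x))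
    (h4 : Ps *ᵥ g + Px *ᵥ (v - x₁) ≤ lam • g) :
    ∀ x : Fin n → ℝ, F *ᵥ x ≤ g →
      F *ᵥ ((Abar + B * K₁) *ᵥ x + (A₂ + B * K₂) *ᵥ Q x) ≤ lam • g := by
  intro x hx i
  have e1 : X₁ * G₁ = Abar + B * K₁ := by
    rw [hdata, hK₁, Matrix.add_mul, Matrix.add_mul, Matrix.mul_assoc, Matrix.mul_assoc,
      Matrix.mul_assoc, hG11, hG21]
    simp
  have e2 : X₁ * G₂ = A₂ + B * K₂ := by
    rw [hdata, hK₂, Matrix.add_mul, Matrix.add_mul, Matrix.mul_assoc, Matrix.mul_assoc,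
      Matrix.mul_assoc, hG12, hG22]
    simp
  rw [← e1, ← e2]
  have h3i := h3 i x
  have h4i := h4 i
  have hneg : (Ps i) ⬝ᵥ (F *ᵥ x - g) ≤ 0 := by
    apply Finset.sum_nonpos
    intro j _
    exact mul_nonpos_of_nonneg_of_nonpos (hPs i j) (sub_nonpos.mpr (hx j))
  have k1 : (Px *ᵥ x₁) i = (Ps *ᵥ (F *ᵥ x₁)) i - (F *ᵥ ((X₁ * G₁) *ᵥ x₁)) i := by
    rw [← h1, Matrix.sub_mulVec, Matrix.mulVec_mulVec, Matrix.mulVec_mulVec]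
    rfl
  have k2 : (Px *ᵥ v) i = (F *ᵥ ((X₁ * G₂) *ᵥ Q x₁)) i := by
    rw [← h2, ← hv, Matrix.mulVec_mulVec, Matrix.mulVec_mulVec, Matrix.mul_assoc]
  have k3 : (Ps i) ⬝ᵥ (F *ᵥ x₁ - g) = (Ps *ᵥ (F *ᵥ x₁)) i - (Ps *ᵥ g) i :=
    dotProduct_sub _ _ _
  have k4 : (F i) ⬝ᵥ ((X₁ * G₁) *ᵥ x₁ + (X₁ * G₂) *ᵥ Q x₁)
      = (F *ᵥ ((X₁ * G₁) *ᵥ x₁)) i + (F *ᵥ ((X₁ * G₂) *ᵥ Q x₁)) i :=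
    dotProduct_add _ _ _
  have k5 : (Ps *ᵥ g + Px *ᵥ (v - x₁)) i = (Ps *ᵥ g) i + ((Px *ᵥ v) i - (Px *ᵥ x₁) i) := by
    rw [Matrix.mulVec_sub]
    rfl
  rw [k5] at h4i
  rw [k3, k4] at h3i
  change (F i) ⬝ᵥ ((X₁ * G₁) *ᵥ x + (X₁ * G₂) *ᵥ Q x) ≤ _
  linarith
end

section
/- Let F ∈ ℝ^{s×n}, g ∈ ℝ^s, λ > 0, M₁ ∈ ℝ^{n×n}, M₂ ∈ ℝ^{n×N}, and fix a row index i. Let Q : ℝⁿ → ℝᴺ be differentiable with Jacobian L₁ ∈ ℝ^{N×n} at a point x₁ ∈ ℝⁿ. Suppose α ∈ ℝ^s has all entries nonnegative, β ∈ ℝⁿ satisfies βᵀ = αᵀ·F − Fᵢ·M₁ and βᵀ = Fᵢ·M₂·L₁, and v ∈ ℝⁿ satisfies L₁·v = Q(x₁). Suppose the Lagrangian φ(x) = αᵀ·(F·x − g) − Fᵢ·(M₁·x + M₂·Q(x)) is convex on ℝⁿ, and that αᵀ·g + βᵀ·(v − x₁) ≤ λ·gᵢ. Then for every x with F·x ≤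 g componentwise, Fᵢ·(M₁·x + M₂·Q(x)) ≤ λ·gᵢ. -/
open Matrix

/-- row-wise Theorem 2 with the second-order condition made
precise as convexity of the Lagrangian. -/
theorem primal_dual_rowwise_contractivity_convex
    (s n N : ℕ)
    (F : Matrix (Fin s) (Fin n) ℝ) (g : Fin s → ℝ)
    (lam : ℝ) (hlam : 0 < lam)
    (M₁ : Matrix (Fin n) (Fin n) ℝ) (M₂ : Matrix (Fin n) (Fin N) ℝ)
    (i : Fin s)
    (Q : (Fin n → ℝ) → (Fin N → ℝ))
    (x₁ : Fin n → ℝ) (L₁ : Matrix (Fin N) (Fin n) ℝ)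
    (hQ : HasFDerivAt Q (LinearMap.toContinuousLinearMap L₁.mulVecLin) x₁)
    (α : Fin s → ℝ) (hα : ∀ j, 0 ≤ α j)
    (β : Fin n → ℝ)
    (hβ1 : β = α ᵥ* F - (F i) ᵥ* M₁)
    (hβ2 : β = ((F i) ᵥ* M₂) ᵥ* L₁)
    (v : Fin n → ℝ) (hv : L₁ *ᵥ v = Q x₁)
    (hconv : ConvexOn ℝ Set.univ
        (fun x : Fin n → ℝ =>
          α ⬝ᵥ (F *ᵥ x - g) - (F i) ⬝ᵥ (M₁ *ᵥ x + M₂ *ᵥ Q x)))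
    (hbound : α ⬝ᵥ g + β ⬝ᵥ (v - x₁) ≤ lam * g i) :
    ∀ x : Fin n → ℝ, F *ᵥ x ≤ g →
      (F i) ⬝ᵥ (M₁ *ᵥ x + M₂ *ᵥ Q x) ≤ lam * g i := by
  intro x hx
  set w : Fin N → ℝ := (F i) ᵥ* M₂ with hw
  have hφ : ∀ y : Fin n → ℝ,
      α ⬝ᵥ (F *ᵥ y - g) - (F i) ⬝ᵥ (M₁ *ᵥ y + M₂ *ᵥ Q y)
        = β ⬝ᵥ y - α ⬝ᵥ g - w ⬝ᵥ Q y := by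
    intro y
    rw [hβ1, hw, dotProduct_sub, dotProduct_add, sub_dotProduct, dotProduct_mulVec,
      dotProduct_mulVec, dotProduct_mulVec]
    ring
  have hconv' : ConvexOn ℝ Set.univ (fun y : Fin n → ℝ => β ⬝ᵥ y - α ⬝ᵥ g - w ⬝ᵥ Q y) := by
    simpa only [hφ] using hconv
  have hline := hconv'.comp_affineMap (AffineMap.lineMap x₁ x)
  rw [Set.preimage_univ] at hline
  have hl : HasDerivAt (fun t : ℝ => AffineMap.lineMap x₁ x t) (x - x₁) (0 : ℝ) :=
    AffineMap.hasDerivAt_lineMap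
  have hdot : ∀ (m : ℕ) (u : Fin m → ℝ) (f : ℝ → Fin m → ℝ) (f' : Fin m → ℝ) (t : ℝ),
      HasDerivAt f f' t → HasDerivAt (fun t => u ⬝ᵥ f t) (u ⬝ᵥ f') t := by
    intro m u f f' t hf
    simp only [dotProduct]
    exact HasDerivAt.fun_sum fun j _ => ((hasDerivAt_pi.1 hf) j).const_mul (u j)
  have hq : HasDerivAt (fun t : ℝ => Q (AffineMap.lineMap x₁ x t)) (L₁ *ᵥ (x - x₁)) (0 : ℝ) := by
    have h0 : AffineMap.lineMap x₁ x (0 : ℝ) = x₁ := AffineMap.lineMap_apply_zero _ _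
    have hQ' := hQ
    rw [← h0] at hQ'
    have := hQ'.comp_hasDerivAt (0 : ℝ) hl
    simpa [Function.comp_def] using this
  have hd := ((hdot _ β _ _ _ hl).sub_const (α ⬝ᵥ g)).sub (hdot _ w _ _ _ hq)
  have hz : β ⬝ᵥ (x - x₁) - w ⬝ᵥ (L₁ *ᵥ (x - x₁)) = 0 := by
    rw [dotProduct_mulVec, ← hβ2, sub_self]
  rw [hz] at hd
  have hs := hline.le_slope_of_hasDerivAt (Set.mem_univ 0) (Set.mem_univ 1) zero_lt_one hd
  simp [slope_def_field] at hs
  have e1 : w ⬝ᵥ Q x₁ = β ⬝ᵥ v := by rw [← hv, dotProduct_mulVec, ← hβ2]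
  have e2 := hφ x
  have e3 : α ⬝ᵥ (F *ᵥ x - g) ≤ 0 := by
    apply Finset.sum_nonpos
    intro j _
    exact mul_nonpos_of_nonneg_of_nonpos (hα j) (sub_nonpos.2 (hx j))
  rw [dotProduct_sub] at hbound
  linarith
end
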